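/- Let R = Q[x_1,x_2,x_3,x_4] and let I be the ideal generated by x_1 x_4, x_1^2, x_3 x_4^2, x_2 x_4^2, x_2^2 x_4, x_1 x_3^2, x_1 x_2^2 − x_3^2 x_4, x_3^4, x_2 x_3^3 − x_4^4, x_2^2 x_3^2, x_2^4. Then A = R/I is a standard graded Artinian algebra that fails the Weak Lefschetz Property: for every linear form l ∈ A_1 there is some i ≥ 0 such that the multiplication map ·l : A_i → A_{i+1} is neither injective nor surjective. -/

import Mathlib

/-!
Write `a, b, c, d` for the four variables, `u = r² a + q² d` and `v = q b - r c`. Modulo the ideal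
a linear form `p a + q b + r c + s d` annihilates the quadric `u v`, because `p a + s d`
multiplies `u` to a multiple of `d²`, which kills `b` and `c`, while
`(q b + r c) v u = (q² b² - r² c²) u` vanishes by the relations in degree three. If `q = r = 0` this
quadric is zero, but then `a b` is annihilated.

The monomials `a b³ c`, `b c³ d` and `d⁵` agree modulo the ideal and span its socle degree. They
are nonzero there: the sum of their three coefficients is a linear functional that vanishes on the
ideal. As `u v b³ = -r³ a b³ c` and `u v c³ = q³ a b³ c` (and `a b · b² c = a b³ c`), the
annihilated quadric `k` has `k y ≠ 0` for some cubic `y`. Hence `k ≠ 0`, so multiplication by the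
linear form `l` is not injective on quadrics, and `y` is not a multiple `l x`, since `k l x = 0`.

The quotient is Artinian because the ideal contains `a²`, `b⁴`, `c⁴` and
`d⁶ = -d² (b c³ - d⁴) + c³ (b d²)`.
-/

open MvPolynomial

/-- The degree-`d` graded piece of the quotient `R ⧸ I`. -/
noncomputable def quotPiece {K : Type} [Field K] {σ : Type}
    (I : Ideal (MvPolynomial σ K)) (d : ℕ) : Submodule K (MvPolynomial σ K ⧸ I) :=
  (MvPolynomial.homogeneousSubmodule σ K d).map (Ideal.Quotient.mkₐ K I).toLinearMap

/-- The second ideal of Abdallah et al.;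
here `X 0, X 1, X 2, X 3` stand for `x_1, x_2, x_3, x_4`. -/
noncomputable def abdallahIdeal₂ : Ideal (MvPolynomial (Fin 4) ℚ) :=
  Ideal.span
    {X 0 * X 3, X 0 ^ 2, X 2 * X 3 ^ 2, X 1 * X 3 ^ 2, X 1 ^ 2 * X 3,
     X 0 * X 2 ^ 2, X 0 * X 1 ^ 2 - X 2 ^ 2 * X 3, X 2 ^ 4,
     X 1 * X 2 ^ 3 - X 3 ^ 4, X 1 ^ 2 * X 2 ^ 2, X 1 ^ 4}

section GradedPieces

lemma not_injective_and_not_surjective_of_mul_ne_zero {A S T : Type*} [CommMonoidWithZero A]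
    [SetLike S A] [SetLike T A] {M : S} {N : T} {l k y : A} (hk : k ∈ M) (hy : y ∈ N)
    (hlk : l * k = 0) (hky : k * y ≠ 0) :
    ¬ (∀ x ∈ M, l * x = 0 → x = 0) ∧ ¬ (∀ z ∈ N, ∃ x ∈ M, l * x = z) := by
  refine ⟨fun hinj => hky ?_, fun hsurj => hky ?_⟩
  · rw [hinj k hk hlk, zero_mul]
  · obtain ⟨x, -, rfl⟩ := hsurj y hy
    rw [mul_left_comm, ← mul_assoc, hlk, zero_mul]

variable {σ R : Type*} [CommSemiring R]

lemma exists_eq_sum_C_mul_X_of_mem_homogeneousSubmodule_one [Fintype σ] {l : MvPolynomial σ R}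
    (hl : l ∈ homogeneousSubmodule σ R 1) : ∃ t : σ → R, l = ∑ i, C (t i) * X i := by
  rw [homogeneousSubmodule_one_eq_span_X, Submodule.mem_span_range_iff_exists_fun] at hl
  obtain ⟨t, rfl⟩ := hl
  exact ⟨t, by simp only [smul_eq_C_mul]⟩

lemma mem_of_isHomogeneous_of_X_pow_mem [Fintype σ] {I : Ideal (MvPolynomial σ R)} {N : σ → ℕ}
    (hN : ∀ i, X i ^ N i ∈ I) {n : ℕ} (hn : ∑ i, (N i - 1) < n) {f : MvPolynomial σ R}
    (hf : f.IsHomogeneous n) : f ∈ I := by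
  rw [f.as_sum]
  refine sum_mem fun v hv => ?_
  obtain ⟨i, -, hi⟩ : ∃ i ∈ Finset.univ, N i - 1 < v i := by
    refine Finset.exists_lt_of_sum_lt (hn.trans_eq ?_)
    rw [hf.degree_eq_sum_deg_support hv, ← Finsupp.degree_apply, Finsupp.degree_eq_sum]
  refine I.mem_of_dvd ?_ (hN i)
  rw [X_pow_eq_monomial, monomial_dvd_monomial, Finsupp.single_le_iff]
  exact ⟨Or.inr (by omega), one_dvd _⟩

variable {K τ : Type} [Field K] {I : Ideal (MvPolynomial τ K)} {n : ℕ}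

lemma mk_mem_quotPiece {f : MvPolynomial τ K} (hf : f.IsHomogeneous n) :
    Ideal.Quotient.mk I f ∈ quotPiece I n :=
  Submodule.mem_map_of_mem hf

lemma quotPiece_eq_bot_of_X_pow_mem [Fintype τ] {N : τ → ℕ} (hN : ∀ i, X i ^ N i ∈ I)
    (hn : ∑ i, (N i - 1) < n) : quotPiece I n = ⊥ := by
  rw [eq_bot_iff]
  rintro _ ⟨f, hf, rfl⟩
  exact Ideal.Quotient.eq_zero_iff_mem.2 (mem_of_isHomogeneous_of_X_pow_mem hN hn hf)

end GradedPieces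

section CoeffSum

variable {σ R : Type*} [CommSemiring R]

open scoped Pointwise in
lemma map_eq_zero_of_mem_ideal_span {M : Type*} [AddCommMonoid M] [Module R M]
    {φ : MvPolynomial σ R →ₗ[R] M} {G : Set (MvPolynomial σ R)}
    (hφ : ∀ g ∈ G, ∀ w, φ (monomial w 1 * g) = 0) {f : MvPolynomial σ R}
    (hf : f ∈ Ideal.span G) : φ f = 0 := by
  have hspan : Submodule.span R (Set.range fun w => monomial w (1 : R)) =
      (⊤ : Submodule R (MvPolynomial σ R)) := by
    rw [← coe_basisMonomials, Module.Basis.span_eq]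
  have hle : Submodule.span R ((Set.range fun w : σ →₀ ℕ => monomial w (1 : R)) • G) ≤ φ.ker := by
    rw [Submodule.span_le]
    rintro _ ⟨_, ⟨w, rfl⟩, g, hg, rfl⟩
    exact hφ g hg w
  rw [Submodule.span_smul_of_span_eq_top hspan] at hle
  exact hle hf

/-- The linear functional adding up the coefficients of the monomials with exponent vector in `S`.
It is used to separate a monomial from an ideal generated by monomials and differences of
monomials. -/
noncomputable def coeffSum (R : Type*) [CommSemiring R] (S : Set (σ →₀ ℕ)) :
    MvPolynomial σ R →ₗ[R] R :=
  (basisMonomials σ R).constr R (S.indicator 1)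

lemma coeffSum_monomial_one (S : Set (σ →₀ ℕ)) (v : σ →₀ ℕ) :
    coeffSum R S (monomial v 1) = S.indicator 1 v := by
  rw [coeffSum, ← congr_fun (coe_basisMonomials σ R) v, Module.Basis.constr_basis]

lemma coeffSum_monomial_mul_eq_zero {S : Set (σ →₀ ℕ)} {w v : σ →₀ ℕ} (h : w + v ∉ S) :
    coeffSum R S (monomial w 1 * monomial v 1) = 0 := by
  rw [monomial_mul, mul_one, coeffSum_monomial_one, Set.indicator_of_notMem h]

lemma coeffSum_monomial_mul_sub_eq_zero {R : Type*} [CommRing R] {S : Set (σ →₀ ℕ)} {w u v : σ →₀ ℕ}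
    (h : w + u ∈ S ↔ w + v ∈ S) :
    coeffSum R S (monomial w 1 * (monomial u 1 - monomial v 1)) = 0 := by
  classical
  simp only [mul_sub, monomial_mul, mul_one, map_sub, coeffSum_monomial_one, Set.indicator_apply,
    Pi.one_apply, h, sub_self]

end CoeffSum

section Relations

/-- The relations that define `A`, for elements `a, b, c, d` of a commutative ring in the roles of
`x_1, x_2, x_3, x_4`. A field is named after the monomials in it. -/
structure AbdallahRelations {A : Type*} [CommRing A] (a b c d : A) : Prop where
  ad : a * d = 0
  aa : a ^ 2 = 0
  cdd : c * d ^ 2 = 0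
  bdd : b * d ^ 2 = 0
  bbd : b ^ 2 * d = 0
  acc : a * c ^ 2 = 0
  abb_ccd : a * b ^ 2 - c ^ 2 * d = 0
  cccc : c ^ 4 = 0
  bccc_dddd : b * c ^ 3 - d ^ 4 = 0
  bbcc : b ^ 2 * c ^ 2 = 0
  bbbb : b ^ 4 = 0

/-- The quadric `(r² a + q² d) (q b - r c)`; under `AbdallahRelations a b c d` it is annihilated by
the linear forms `p a + q b + r c + s d` for all `p` and `s`. -/
def annihilatedQuadric {A : Type*} [CommRing A] (q r a b c d : A) : A :=
  (r ^ 2 * a + q ^ 2 * d) * (q * b - r * c)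

variable {A : Type*} [CommRing A] {a b c d : A}

lemma map_annihilatedQuadric {B : Type*} [CommRing B] (f : A →+* B) (q r a b c d : A) :
    f (annihilatedQuadric q r a b c d) =
      annihilatedQuadric (f q) (f r) (f a) (f b) (f c) (f d) := by
  simp only [annihilatedQuadric, map_mul, map_add, map_sub, map_pow]

namespace AbdallahRelations

lemma linearForm_mul_ab (h : AbdallahRelations a b c d) (p s : A) :
    (p * a + s * d) * (a * b) = 0 := by
  linear_combination p * b * h.aa + s * b * h.ad

lemma d_pow_six_eq_zero (h : AbdallahRelations a b c d) : d ^ 6 = 0 := by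
  linear_combination c ^ 3 * h.bdd - d ^ 2 * h.bccc_dddd

lemma linearForm_mul_annihilatedQuadric (h : AbdallahRelations a b c d) (p q r s : A) :
    (p * a + q * b + r * c + s * d) * annihilatedQuadric q r a b c d = 0 := by
  have hu : (p * a + s * d) * (r ^ 2 * a + q ^ 2 * d) = s * q ^ 2 * d ^ 2 := by
    linear_combination p * r ^ 2 * h.aa + (p * q ^ 2 + s * r ^ 2) * h.ad
  have hv : d ^ 2 * (q * b - r * c) = 0 := by
    linear_combination q * h.bdd - r * h.cdd
  have huv : (q ^ 2 * b ^ 2 - r ^ 2 * c ^ 2) * (r ^ 2 * a + q ^ 2 * d) = 0 := by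
    linear_combination q ^ 2 * r ^ 2 * h.abb_ccd - r ^ 4 * h.acc + q ^ 4 * h.bbd
  rw [annihilatedQuadric]
  linear_combination (q * b - r * c) * hu + s * q ^ 2 * hv + huv

lemma annihilatedQuadric_mul_b_pow_three (h : AbdallahRelations a b c d) (q r : A) :
    annihilatedQuadric q r a b c d * b ^ 3 = -(r ^ 3 * (a * b ^ 3 * c)) := by
  rw [annihilatedQuadric]
  linear_combination q * (r ^ 2 * a + q ^ 2 * d) * h.bbbb - q ^ 2 * r * b * c * h.bbd

lemma annihilatedQuadric_mul_c_pow_three (h : AbdallahRelations a b c d) (q r : A) :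
    annihilatedQuadric q r a b c d * c ^ 3 = q ^ 3 * (a * b ^ 3 * c) := by
  have hsocle : b * c ^ 3 * d = a * b ^ 3 * c := by
    linear_combination -b * c * h.abb_ccd
  rw [annihilatedQuadric]
  linear_combination q ^ 3 * hsocle + q * r ^ 2 * b * c * h.acc
    - r * (r ^ 2 * a + q ^ 2 * d) * h.cccc

end AbdallahRelations

end Relations

section AbdallahIdeal

/-- The ideal of `abdallahIdeal₂`, over an arbitrary coefficient ring. -/
noncomputable def abdallahIdeal (K : Type*) [CommRing K] : Ideal (MvPolynomial (Fin 4) K) :=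
  Ideal.span
    {X 0 * X 3, X 0 ^ 2, X 2 * X 3 ^ 2, X 1 * X 3 ^ 2, X 1 ^ 2 * X 3,
     X 0 * X 2 ^ 2, X 0 * X 1 ^ 2 - X 2 ^ 2 * X 3, X 2 ^ 4,
     X 1 * X 2 ^ 3 - X 3 ^ 4, X 1 ^ 2 * X 2 ^ 2, X 1 ^ 4}

lemma abdallahRelations_mk (K : Type*) [CommRing K] :
    AbdallahRelations (Ideal.Quotient.mk (abdallahIdeal K) (X 0))
      (Ideal.Quotient.mk (abdallahIdeal K) (X 1)) (Ideal.Quotient.mk (abdallahIdeal K) (X 2))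
      (Ideal.Quotient.mk (abdallahIdeal K) (X 3)) := by
  constructor <;> simp only [← map_mul, ← map_pow, ← map_sub] <;>
    exact Ideal.Quotient.eq_zero_iff_mem.2 (Ideal.subset_span (by simp))

/-- The exponent vectors of `x_1 x_2³ x_3`, `x_2 x_3³ x_4` and `x_4⁵`, the monomials of degree five
outside `abdallahIdeal`; they are all congruent modulo that ideal. -/
def socleExponents : Set (Fin 4 →₀ ℕ) :=
  {v | ⇑v = ![1, 3, 1, 0] ∨ ⇑v = ![0, 1, 3, 1] ∨ ⇑v = ![0, 0, 0, 5]}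

lemma mem_socleExponents {v : Fin 4 →₀ ℕ} :
    v ∈ socleExponents ↔
      (v 0 = 1 ∧ v 1 = 3 ∧ v 2 = 1 ∧ v 3 = 0) ∨ (v 0 = 0 ∧ v 1 = 1 ∧ v 2 = 3 ∧ v 3 = 1) ∨
        (v 0 = 0 ∧ v 1 = 0 ∧ v 2 = 0 ∧ v 3 = 5) := by
  simp [socleExponents, funext_iff, Fin.forall_fin_succ]

lemma coeffSum_socleExponents_eq_zero {K : Type*} [CommRing K] {f : MvPolynomial (Fin 4) K}
    (hf : f ∈ abdallahIdeal K) : coeffSum K socleExponents f = 0 := by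
  refine map_eq_zero_of_mem_ideal_span (fun g hg w => ?_) hf
  simp only [X, monomial_pow, monomial_mul, one_pow, mul_one, Set.mem_insert_iff,
    Set.mem_singleton_iff] at hg
  rcases hg with rfl | rfl | rfl | rfl | rfl | rfl | rfl | rfl | rfl | rfl | rfl
  -- No monomial generator divides one of the three monomials, and rewriting a multiple of one term
  -- of a binomial generator into the other does not lead in or out of this set of monomials.
  all_goals
    first | rw [coeffSum_monomial_mul_eq_zero] | rw [coeffSum_monomial_mul_sub_eq_zero]
    simp [mem_socleExponents]

lemma mk_socleMonomial_ne_zero (K : Type*) [CommRing K] [Nontrivial K] :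
    Ideal.Quotient.mk (abdallahIdeal K) (X 0 * X 1 ^ 3 * X 2) ≠ 0 := by
  intro h
  have hzero := coeffSum_socleExponents_eq_zero (Ideal.Quotient.eq_zero_iff_mem.1 h)
  simp only [X, monomial_pow, monomial_mul, one_pow, mul_one, coeffSum_monomial_one] at hzero
  rw [Set.indicator_of_mem (by simp [mem_socleExponents])] at hzero
  exact one_ne_zero hzero

lemma isHomogeneous_annihilatedQuadric {R : Type*} [CommRing R] (q r : R) :
    (annihilatedQuadric (C q) (C r) (X 0) (X 1) (X 2) (X 3) :
      MvPolynomial (Fin 4) R).IsHomogeneous 2 := by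
  rw [annihilatedQuadric, ← C_pow, ← C_pow]
  exact ((isHomogeneous_C_mul_X _ _).add (isHomogeneous_C_mul_X _ _)).mul
    ((isHomogeneous_C_mul_X _ _).sub (isHomogeneous_C_mul_X _ _))

variable (K : Type) [Field K]

lemma quotPiece_abdallahIdeal_eq_bot {i : ℕ} (hi : 13 ≤ i) :
    quotPiece (abdallahIdeal K) i = ⊥ := by
  have h := abdallahRelations_mk K
  refine quotPiece_eq_bot_of_X_pow_mem (N := ![2, 4, 4, 6]) (fun j => ?_) ?_
  · rw [← Ideal.Quotient.eq_zero_iff_mem, map_pow]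
    fin_cases j
    exacts [h.aa, h.bbbb, h.cccc, h.d_pow_six_eq_zero]
  · exact lt_of_lt_of_le (by decide) hi

variable {K}

lemma exists_annihilatedQuadric_mul_ne_zero {q r : K} (hqr : q ≠ 0 ∨ r ≠ 0) :
    ∃ y ∈ quotPiece (abdallahIdeal K) 3, Ideal.Quotient.mk (abdallahIdeal K)
      (annihilatedQuadric (C q) (C r) (X 0) (X 1) (X 2) (X 3)) * y ≠ 0 := by
  have h := abdallahRelations_mk K
  have hsocle := mk_socleMonomial_ne_zero K
  have hunit {t : K} (ht : t ≠ 0) : IsUnit (Ideal.Quotient.mk (abdallahIdeal K) (C t) ^ 3) :=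
    (((IsUnit.mk0 t ht).map C).map _).pow 3
  simp only [map_annihilatedQuadric, map_mul, map_pow] at hsocle ⊢
  rcases hqr with hq | hr
  · refine ⟨_, mk_mem_quotPiece (isHomogeneous_X_pow 2 3), ?_⟩
    rw [map_pow, h.annihilatedQuadric_mul_c_pow_three]
    exact (hunit hq).mul_right_eq_zero.not.2 hsocle
  · refine ⟨_, mk_mem_quotPiece (isHomogeneous_X_pow 1 3), ?_⟩
    rw [map_pow, h.annihilatedQuadric_mul_b_pow_three]
    exact neg_ne_zero.2 ((hunit hr).mul_right_eq_zero.not.2 hsocle)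

lemma exists_annihilated_quadric_mul_cubic_ne_zero {l : MvPolynomial (Fin 4) K}
    (hl : l ∈ homogeneousSubmodule (Fin 4) K 1) :
    ∃ k ∈ quotPiece (abdallahIdeal K) 2, ∃ y ∈ quotPiece (abdallahIdeal K) 3,
      Ideal.Quotient.mk (abdallahIdeal K) l * k = 0 ∧ k * y ≠ 0 := by
  have h := abdallahRelations_mk K
  obtain ⟨t, rfl⟩ := exists_eq_sum_C_mul_X_of_mem_homogeneousSubmodule_one hl
  by_cases hqr : t 1 ≠ 0 ∨ t 2 ≠ 0
  · obtain ⟨y, hy, hky⟩ := exists_annihilatedQuadric_mul_ne_zero hqr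
    refine ⟨_, mk_mem_quotPiece (isHomogeneous_annihilatedQuadric _ _), y, hy, ?_, hky⟩
    simp only [Fin.sum_univ_four, map_add, map_mul, map_annihilatedQuadric]
    exact h.linearForm_mul_annihilatedQuadric _ _ _ _
  · obtain ⟨hq, hr⟩ : t 1 = 0 ∧ t 2 = 0 := by simpa only [not_or, not_not] using hqr
    refine ⟨_, mk_mem_quotPiece ((isHomogeneous_X K 0).mul (isHomogeneous_X K 1)), _,
      mk_mem_quotPiece ((isHomogeneous_X_pow 1 2).mul (isHomogeneous_X K 2)), ?_, ?_⟩
    · simpa only [Fin.sum_univ_four, hq, hr, map_zero, zero_mul, add_zero, map_add, map_mul]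
        using h.linearForm_mul_ab _ _
    · convert mk_socleMonomial_ne_zero K using 1
      rw [← map_mul]
      ring_nf

end AbdallahIdeal

theorem abdallah_second_ideal_fails_WLP_general (K : Type) [Field K] :
    (∃ N : ℕ, ∀ i ≥ N, quotPiece (abdallahIdeal K) i = ⊥) ∧
    ∀ l ∈ homogeneousSubmodule (Fin 4) K 1, ∃ i : ℕ,
      ¬ (∀ x ∈ quotPiece (abdallahIdeal K) i,
          Ideal.Quotient.mk (abdallahIdeal K) l * x = 0 → x = 0) ∧
      ¬ (∀ y ∈ quotPiece (abdallahIdeal K) (i + 1),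
          ∃ x ∈ quotPiece (abdallahIdeal K) i,
            Ideal.Quotient.mk (abdallahIdeal K) l * x = y) := by
  refine ⟨⟨13, fun i hi => quotPiece_abdallahIdeal_eq_bot K hi⟩, fun l hl => ⟨2, ?_⟩⟩
  obtain ⟨k, hk, y, hy, hlk, hky⟩ := exists_annihilated_quadric_mul_cubic_ne_zero hl
  exact not_injective_and_not_surjective_of_mul_ne_zero hk hy hlk hky

/-- the second ideal of Abdallah et al. is Artinian and fails WLP. -/
theorem abdallah_second_ideal_fails_WLP :
    (∃ N : ℕ, ∀ i ≥ N, quotPiece abdallahIdeal₂ i = ⊥) ∧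
    ∀ l ∈ homogeneousSubmodule (Fin 4) ℚ 1, ∃ i : ℕ,
      ¬ (∀ x ∈ quotPiece abdallahIdeal₂ i,
          Ideal.Quotient.mk abdallahIdeal₂ l * x = 0 → x = 0) ∧
      ¬ (∀ y ∈ quotPiece abdallahIdeal₂ (i + 1),
          ∃ x ∈ quotPiece abdallahIdeal₂ i,
            Ideal.Quotient.mk abdallahIdeal₂ l * x = y) :=
  abdallah_second_ideal_fails_WLP_general ℚ
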